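/- Under the adapted pure-frontal setup with focal data, assume κ_t(0) ≠ 0 and r_c(0) ≠ 0 (so f has a 5/2-cuspidal edge at 0). Then for j = 1,2 the focal surface C_j is an immersion at 0, and its Gaussian curvature at 0, computed with the unit normal e_j = x_j/‖x_j‖ as K^{C_j} = (L^C N^C − (M^C)²)/(E^C G^C − (F^C)²) with E^C = ⟨(C_j)_u,(C_j)_u⟩, F^C = ⟨(C_j)_u,(C_j)_v⟩, G^C = ⟨(C_j)_v,(C_j)_v⟩, L^C = −⟨(C_j)_u,(e_j)_u⟩, M^C = −⟨(C_j)_v,(e_j)_u⟩, N^C = −⟨(C_j)_v,(e_j)_v⟩, satisfies K^{C_j}(0) = −κ_t(0)²·κ_j(0)⁴/(κ_t(0)² + (κ_ν(0)−κ_j(0))²)²; in particular K^{C_j}(0) < 0. -/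

import Mathlib

open Filter

noncomputable section

/-- Vectors in ℝ³, modeled as `Fin 3 → ℝ`. -/
abbrev R3 : Type := Fin 3 → ℝ

/-- The Euclidean inner product on ℝ³. -/
def dot3 (a b : R3) : ℝ := a 0 * b 0 + a 1 * b 1 + a 2 * b 2

/-- The Euclidean norm on ℝ³. -/
def norm3 (a : R3) : ℝ := Real.sqrt (dot3 a a)

/-- Partial derivative in the `u`-direction. -/
def pu {E : Type*} [NormedAddCommGroup E] [NormedSpace ℝ E] (F : ℝ × ℝ → E) (p : ℝ × ℝ) : E :=
  fderiv ℝ F p (1, 0)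

/-- Partial derivative in the `v`-direction. -/
def pv {E : Type*} [NormedAddCommGroup E] [NormedSpace ℝ E] (F : ℝ × ℝ → E) (p : ℝ × ℝ) : E :=
  fderiv ℝ F p (0, 1)

/-- The adapted pure-frontal setup: `f` is a frontal with unit normal `ν`,
`f_v = v·h`, `ν_v = v·ν₁`, the frame `{f_u, h, ν}` is linearly independent everywhere
and orthonormal along the `u`-axis. -/
structure AdaptedPureFrontal (f ν h ν₁ : ℝ × ℝ → R3) : Prop where
  smooth_f : ContDiff ℝ (⊤ : ℕ∞) f
  smooth_ν : ContDiff ℝ (⊤ : ℕ∞) ν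
  smooth_h : ContDiff ℝ (⊤ : ℕ∞) h
  smooth_ν₁ : ContDiff ℝ (⊤ : ℕ∞) ν₁
  unit_ν : ∀ p, dot3 (ν p) (ν p) = 1
  orth_fu_ν : ∀ p, dot3 (pu f p) (ν p) = 0
  orth_fv_ν : ∀ p, dot3 (pv f p) (ν p) = 0
  fv_eq : ∀ p : ℝ × ℝ, pv f p = p.2 • h p
  νv_eq : ∀ p : ℝ × ℝ, pv ν p = p.2 • ν₁ p
  indep : ∀ p, LinearIndependent ℝ ![pu f p, h p, ν p]
  adapted_fu : ∀ u : ℝ, dot3 (pu f (u, 0)) (pu f (u, 0)) = 1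
  adapted_h : ∀ u : ℝ, dot3 (h (u, 0)) (h (u, 0)) = 1
  adapted_fu_h : ∀ u : ℝ, dot3 (pu f (u, 0)) (h (u, 0)) = 0
  adapted_h_ν : ∀ u : ℝ, dot3 (h (u, 0)) (ν (u, 0)) = 0

/-- Ẽ = ⟨f_u, f_u⟩. -/
def Et (f : ℝ × ℝ → R3) (p : ℝ × ℝ) : ℝ := dot3 (pu f p) (pu f p)

/-- F̃ = ⟨f_u, h⟩. -/
def Ft (f h : ℝ × ℝ → R3) (p : ℝ × ℝ) : ℝ := dot3 (pu f p) (h p)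

/-- G̃ = ⟨h, h⟩. -/
def Gt (h : ℝ × ℝ → R3) (p : ℝ × ℝ) : ℝ := dot3 (h p) (h p)

/-- L̃ = −⟨f_u, ν_u⟩. -/
def Lt (f ν : ℝ × ℝ → R3) (p : ℝ × ℝ) : ℝ := -dot3 (pu f p) (pu ν p)

/-- M̃ = −⟨h, ν_u⟩. -/
def Mt (h ν : ℝ × ℝ → R3) (p : ℝ × ℝ) : ℝ := -dot3 (h p) (pu ν p)

/-- Ñ₁ = −⟨h, ν₁⟩. -/
def Nt1 (h ν₁ : ℝ × ℝ → R3) (p : ℝ × ℝ) : ℝ := -dot3 (h p) (ν₁ p)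

/-- The Gaussian curvature K = (L̃Ñ₁ − M̃²)/(ẼG̃ − F̃²). -/
def Kg (f ν h ν₁ : ℝ × ℝ → R3) (p : ℝ × ℝ) : ℝ :=
  (Lt f ν p * Nt1 h ν₁ p - Mt h ν p ^ 2) / (Et f p * Gt h p - Ft f h p ^ 2)

/-- The mean curvature H = (ẼÑ₁ − 2F̃M̃ + G̃L̃)/(2(ẼG̃ − F̃²)). -/
def Hm (f ν h ν₁ : ℝ × ℝ → R3) (p : ℝ × ℝ) : ℝ :=
  (Et f p * Nt1 h ν₁ p - 2 * Ft f h p * Mt h ν p + Gt h p * Lt f ν p) /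
    (2 * (Et f p * Gt h p - Ft f h p ^ 2))

/-- The principal curvature κ = H + ε√(H² − K); `ε = 1` gives κ₁ and `ε = -1` gives κ₂. -/
def kap (f ν h ν₁ : ℝ × ℝ → R3) (ε : ℝ) (p : ℝ × ℝ) : ℝ :=
  Hm f ν h ν₁ p + ε * Real.sqrt (Hm f ν h ν₁ p ^ 2 - Kg f ν h ν₁ p)

/-- First component of the principal vector field V = −v(M̃ − κF̃)∂_u + (L̃ − κẼ)∂_v. -/
def V1c (f ν h ν₁ : ℝ × ℝ → R3) (ε : ℝ) (p : ℝ × ℝ) : ℝ :=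
  -(p.2 * (Mt h ν p - kap f ν h ν₁ ε p * Ft f h p))

/-- Second component of the principal vector field V = −v(M̃ − κF̃)∂_u + (L̃ − κẼ)∂_v. -/
def V2c (f ν h ν₁ : ℝ × ℝ → R3) (ε : ℝ) (p : ℝ × ℝ) : ℝ :=
  Lt f ν p - kap f ν h ν₁ ε p * Et f p

/-- Directional derivative of `g` along the principal vector field V. -/
def VD (f ν h ν₁ : ℝ × ℝ → R3) (ε : ℝ) {E : Type*} [NormedAddCommGroup E] [NormedSpace ℝ E]
    (g : ℝ × ℝ → E) (p : ℝ × ℝ) : E :=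
  V1c f ν h ν₁ ε p • pu g p + V2c f ν h ν₁ ε p • pv g p

/-- The radius of principal curvature ρ = 1/κ. -/
def rho (f ν h ν₁ : ℝ × ℝ → R3) (ε : ℝ) (p : ℝ × ℝ) : ℝ := (kap f ν h ν₁ ε p)⁻¹

/-- The focal surface C = f + ρ·ν. -/
def Cf (f ν h ν₁ : ℝ × ℝ → R3) (ε : ℝ) (p : ℝ × ℝ) : R3 :=
  f p + rho f ν h ν₁ ε p • ν p

/-- The normal direction x = −(M̃ − κF̃)·f_u + (L̃ − κẼ)·h of the focal surface. -/
def xj (f ν h ν₁ : ℝ × ℝ → R3) (ε : ℝ) (p : ℝ × ℝ) : R3 :=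
  (-(Mt h ν p - kap f ν h ν₁ ε p * Ft f h p)) • pu f p +
    (Lt f ν p - kap f ν h ν₁ ε p * Et f p) • h p

/-- The unit normal e = x/‖x‖ of the focal surface. -/
def ej (f ν h ν₁ : ℝ × ℝ → R3) (ε : ℝ) (p : ℝ × ℝ) : R3 :=
  (norm3 (xj f ν h ν₁ ε p))⁻¹ • xj f ν h ν₁ ε p

/-- The limiting normal curvature κ_ν(u) = L̃(u,0). -/
def kν (f ν : ℝ × ℝ → R3) (u : ℝ) : ℝ := Lt f ν (u, 0)

/-- The cuspidal torsion κ_t(u) = M̃(u,0). -/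
def kt (h ν : ℝ × ℝ → R3) (u : ℝ) : ℝ := Mt h ν (u, 0)

/-- The bias r_b(u) = 3Ñ₁(u,0). -/
def rb (h ν₁ : ℝ × ℝ → R3) (u : ℝ) : ℝ := 3 * Nt1 h ν₁ (u, 0)

/-- The secondary cuspidal curvature r_c(u) = 24((Ñ₁)_v − 2F̃_vM̃ − G̃_vÑ₁)(u,0). -/
def rc (f ν h ν₁ : ℝ × ℝ → R3) (u : ℝ) : ℝ :=
  24 * (pv (Nt1 h ν₁) (u, 0) - 2 * pv (Ft f h) (u, 0) * Mt h ν (u, 0) -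
    pv (Gt h) (u, 0) * Nt1 h ν₁ (u, 0))

/-- The singular curvature κ_s(u) = ⟨f_uu, h⟩(u,0). -/
def ks (f h : ℝ × ℝ → R3) (u : ℝ) : ℝ := dot3 (pu (pu f) (u, 0)) (h (u, 0))

/-- The rank of the differential of `F` at `p`. -/
def rankAt (F : ℝ × ℝ → R3) (p : ℝ × ℝ) : ℕ :=
  Module.finrank ℝ (LinearMap.range (fderiv ℝ F p).toLinearMap)

/-- E^C = ⟨(C_j)_u, (C_j)_u⟩, first fundamental form of the focal surface. -/
def EC (f ν h ν₁ : ℝ × ℝ → R3) (ε : ℝ) (p : ℝ × ℝ) : ℝ :=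
  dot3 (pu (Cf f ν h ν₁ ε) p) (pu (Cf f ν h ν₁ ε) p)

/-- F^C = ⟨(C_j)_u, (C_j)_v⟩. -/
def FC (f ν h ν₁ : ℝ × ℝ → R3) (ε : ℝ) (p : ℝ × ℝ) : ℝ :=
  dot3 (pu (Cf f ν h ν₁ ε) p) (pv (Cf f ν h ν₁ ε) p)

/-- G^C = ⟨(C_j)_v, (C_j)_v⟩. -/
def GC (f ν h ν₁ : ℝ × ℝ → R3) (ε : ℝ) (p : ℝ × ℝ) : ℝ :=
  dot3 (pv (Cf f ν h ν₁ ε) p) (pv (Cf f ν h ν₁ ε) p)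

/-- L^C = −⟨(C_j)_u, (e_j)_u⟩, second fundamental form of the focal surface. -/
def LC (f ν h ν₁ : ℝ × ℝ → R3) (ε : ℝ) (p : ℝ × ℝ) : ℝ :=
  -dot3 (pu (Cf f ν h ν₁ ε) p) (pu (ej f ν h ν₁ ε) p)

/-- M^C = −⟨(C_j)_v, (e_j)_u⟩. -/
def MC (f ν h ν₁ : ℝ × ℝ → R3) (ε : ℝ) (p : ℝ × ℝ) : ℝ :=
  -dot3 (pv (Cf f ν h ν₁ ε) p) (pu (ej f ν h ν₁ ε) p)

/-- N^C = −⟨(C_j)_v, (e_j)_v⟩. -/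
def NC (f ν h ν₁ : ℝ × ℝ → R3) (ε : ℝ) (p : ℝ × ℝ) : ℝ :=
  -dot3 (pv (Cf f ν h ν₁ ε) p) (pv (ej f ν h ν₁ ε) p)

/-- The Gaussian curvature of the focal surface C_j, computed with unit normal e_j. -/
def KC (f ν h ν₁ : ℝ × ℝ → R3) (ε : ℝ) (p : ℝ × ℝ) : ℝ :=
  (LC f ν h ν₁ ε p * NC f ν h ν₁ ε p - MC f ν h ν₁ ε p ^ 2) /
    (EC f ν h ν₁ ε p * GC f ν h ν₁ ε p - FC f ν h ν₁ ε p ^ 2)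

/-- The mean curvature of the focal surface C_j, computed with unit normal e_j. -/
def HC (f ν h ν₁ : ℝ × ℝ → R3) (ε : ℝ) (p : ℝ × ℝ) : ℝ :=
  (EC f ν h ν₁ ε p * NC f ν h ν₁ ε p - 2 * FC f ν h ν₁ ε p * MC f ν h ν₁ ε p +
      GC f ν h ν₁ ε p * LC f ν h ν₁ ε p) /
    (2 * (EC f ν h ν₁ ε p * GC f ν h ν₁ ε p - FC f ν h ν₁ ε p ^ 2))

/-!
The principal curvature `κ` satisfies `(L̃ − κẼ)(Ñ₁ − κG̃) = (M̃ − κF̃)²`. Along the singular curve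
`v = 0` the mixed derivatives `f_uv` and `ν_uv` vanish, so `Ẽ_v = L̃_v = 0` and the Weingarten
equation `ν_u = −κ_ν f_u − κ_t h` expresses `M̃_v` through `F̃_v` and `G̃_v`. Differentiating the
equation for `κ` in `v` therefore leaves `(κ_ν + Ñ₁ − 2κ) κ_v = (κ_ν − κ) r_c / 24`. If `x ≠ 0`,
then `κ ≠ κ_ν`, hence `r_c ≠ 0` forces `κ_v ≠ 0`.

Since `f_v = ν_v = 0` there, `C_v = ρ_v ν` and `C_u = ρ((κ − κ_ν) f_u − κ_t h) + ρ_u ν`, so the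
first fundamental form of `C` has determinant `(ρ_v ρ ‖x‖)²`. Moreover `⟨ν, e⟩ = 0` gives `N^C = 0`
and `M^C = ρ_v ⟨ν_u, e⟩ = ρ_v κ_t κ / ‖x‖`, which determines the Gaussian curvature.
-/

section EuclideanSpace

theorem dot3_eq_dotProduct (a b : R3) : dot3 a b = a ⬝ᵥ b := by
  simp [dot3, dotProduct, Fin.sum_univ_three]

theorem dot3_comm (a b : R3) : dot3 a b = dot3 b a := by
  simp only [dot3_eq_dotProduct, dotProduct_comm]

theorem dot3_add_left (a b c : R3) : dot3 (a + b) c = dot3 a c + dot3 b c := by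
  simp only [dot3_eq_dotProduct, add_dotProduct]

theorem dot3_add_right (a b c : R3) : dot3 a (b + c) = dot3 a b + dot3 a c := by
  simp only [dot3_eq_dotProduct, dotProduct_add]

theorem dot3_smul_left (r : ℝ) (a b : R3) : dot3 (r • a) b = r * dot3 a b := by
  simp only [dot3_eq_dotProduct, smul_dotProduct, smul_eq_mul]

theorem dot3_smul_right (r : ℝ) (a b : R3) : dot3 a (r • b) = r * dot3 a b := by
  simp only [dot3_eq_dotProduct, dotProduct_smul, smul_eq_mul]

theorem dot3_zero_left (a : R3) : dot3 0 a = 0 := by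
  simp only [dot3_eq_dotProduct, zero_dotProduct]

theorem dot3_zero_right (a : R3) : dot3 a 0 = 0 := by
  simp only [dot3_eq_dotProduct, dotProduct_zero]

theorem dot3_self_nonneg (a : R3) : 0 ≤ dot3 a a := by
  rw [dot3_eq_dotProduct]
  exact Finset.sum_nonneg fun i _ => mul_self_nonneg (a i)

theorem dot3_self_eq_zero {a : R3} : dot3 a a = 0 ↔ a = 0 := by
  rw [dot3_eq_dotProduct, dotProduct_self_eq_zero]

theorem norm3_sq (a : R3) : norm3 a ^ 2 = dot3 a a :=
  Real.sq_sqrt (dot3_self_nonneg a)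

theorem norm3_eq_zero {a : R3} : norm3 a = 0 ↔ a = 0 := by
  rw [← sq_eq_zero_iff, norm3_sq, dot3_self_eq_zero]

theorem linearIndependent_pair_iff_gram_ne_zero {a b : R3} :
    LinearIndependent ℝ ![a, b] ↔ dot3 a a * dot3 b b - dot3 a b ^ 2 ≠ 0 := by
  rw [LinearIndependent.pair_iff]
  refine ⟨fun hab hgram => ?_, fun hgram s t hst => ?_⟩
  · have hself : dot3 (dot3 b b • a + -dot3 a b • b) (dot3 b b • a + -dot3 a b • b) = 0 := by
      simp only [dot3_add_left, dot3_add_right, dot3_smul_left, dot3_smul_right, dot3_comm b a]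
      linear_combination dot3 b b * hgram
    have hb : b = 0 := dot3_self_eq_zero.1 (hab _ _ (dot3_self_eq_zero.1 hself)).1
    exact one_ne_zero (hab 0 1 (by rw [hb, zero_smul, smul_zero, add_zero])).2
  · have ha := congrArg (dot3 a) hst
    have hb := congrArg (dot3 b) hst
    simp only [dot3_add_right, dot3_smul_right, dot3_zero_right, dot3_comm b a] at ha hb
    constructor <;> apply (mul_eq_zero.1 ?_).resolve_right hgram
    · linear_combination dot3 b b * ha - dot3 a b * hb
    · linear_combination dot3 a a * hb - dot3 a b * ha

theorem eq_zero_of_dotProduct_eq_zero {K n : Type*} [Field K] [Fintype n]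
    {e : n → n → K} (he : LinearIndependent K e) {x : n → K} (hx : ∀ i, e i ⬝ᵥ x = 0) : x = 0 := by
  classical
  exact Matrix.mulVec_injective_of_isUnit (Matrix.linearIndependent_rows_iff_isUnit.1 he)
    ((funext hx).trans (Matrix.mulVec_zero (Matrix.of e)).symm)

variable {E : Type*} [NormedAddCommGroup E] [NormedSpace ℝ E] {a b : E → R3} {p : E}

theorem differentiableAt_dot3 (ha : DifferentiableAt ℝ a p) (hb : DifferentiableAt ℝ b p) :
    DifferentiableAt ℝ (fun q => dot3 (a q) (b q)) p := by
  unfold dot3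
  fun_prop

theorem fderiv_dot3_apply (ha : DifferentiableAt ℝ a p) (hb : DifferentiableAt ℝ b p) (w : E) :
    fderiv ℝ (fun q => dot3 (a q) (b q)) p w =
      dot3 (fderiv ℝ a p w) (b p) + dot3 (a p) (fderiv ℝ b p w) := by
  have ha' := fun i => hasFDerivAt_pi'.1 ha.hasFDerivAt i
  have hb' := fun i => hasFDerivAt_pi'.1 hb.hasFDerivAt i
  have hab : HasFDerivAt (fun q => dot3 (a q) (b q)) _ p :=
    (((ha' 0).mul (hb' 0)).add ((ha' 1).mul (hb' 1))).add ((ha' 2).mul (hb' 2))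
  rw [hab.fderiv]
  simp only [add_apply, smul_apply, ContinuousLinearMap.comp_apply, ContinuousLinearMap.proj_apply,
    smul_eq_mul, dot3]
  ring

theorem dot3_fderiv_eq_neg_of_dot3_eq_const {c : ℝ} (ha : DifferentiableAt ℝ a p)
    (hb : DifferentiableAt ℝ b p) (hab : ∀ q, dot3 (a q) (b q) = c) (w : E) :
    dot3 (a p) (fderiv ℝ b p w) = -dot3 (fderiv ℝ a p w) (b p) := by
  have hderiv := fderiv_dot3_apply ha hb w
  simp only [hab, fderiv_fun_const, Pi.zero_apply, zero_apply] at hderiv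
  linarith

theorem differentiableAt_norm3 (ha : DifferentiableAt ℝ a p) (hp : a p ≠ 0) :
    DifferentiableAt ℝ (fun q => norm3 (a q)) p :=
  (differentiableAt_dot3 ha ha).sqrt (dot3_self_eq_zero.not.2 hp)

end EuclideanSpace

section PartialDerivatives

variable {E : Type*} [NormedAddCommGroup E] [NormedSpace ℝ E] {g : ℝ × ℝ → E}

theorem fderiv_apply_eq_pu_add_pv (p : ℝ × ℝ) (s t : ℝ) :
    fderiv ℝ g p (s, t) = s • pu g p + t • pv g p := by
  simp [pu, pv, ← map_smul, ← map_add]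

theorem injective_fderiv_of_linearIndependent {p : ℝ × ℝ}
    (hg : LinearIndependent ℝ ![pu g p, pv g p]) : Function.Injective (fderiv ℝ g p) := by
  rw [injective_iff_map_eq_zero]
  rintro ⟨s, t⟩ hst
  rw [fderiv_apply_eq_pu_add_pv] at hst
  obtain ⟨rfl, rfl⟩ := LinearIndependent.pair_iff.1 hg s t hst
  rfl

theorem hasDerivAt_pu {u v : ℝ} (hg : DifferentiableAt ℝ g (u, v)) :
    HasDerivAt (fun t => g (t, v)) (pu g (u, v)) u :=
  hg.hasFDerivAt.comp_hasDerivAt u ((hasDerivAt_id u).prodMk (hasDerivAt_const u v))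

theorem hasDerivAt_pv {u v : ℝ} (hg : DifferentiableAt ℝ g (u, v)) :
    HasDerivAt (fun t => g (u, t)) (pv g (u, v)) v :=
  hg.hasFDerivAt.comp_hasDerivAt v ((hasDerivAt_const v u).prodMk (hasDerivAt_id v))

theorem differentiable_fderiv_apply (hg : ContDiff ℝ 2 g) (w : ℝ × ℝ) :
    Differentiable ℝ (fun p => fderiv ℝ g p w) :=
  ((hg.fderiv_right (m := 1) (by norm_num)).clm_apply contDiff_const).differentiable one_ne_zero

theorem pv_pu_eq_pu_pv (hg : ContDiff ℝ 2 g) (p : ℝ × ℝ) : pv (pu g) p = pu (pv g) p := by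
  have hd : DifferentiableAt ℝ (fderiv ℝ g) p :=
    (hg.fderiv_right (m := 1) (by norm_num)).differentiable one_ne_zero p
  have hsecond (w z : ℝ × ℝ) :
      fderiv ℝ (fun q => fderiv ℝ g q w) p z = fderiv ℝ (fderiv ℝ g) p z w := by
    simp [fderiv_clm_apply hd (differentiableAt_const w)]
  have hsymm : IsSymmSndFDerivAt ℝ g p := hg.contDiffAt.isSymmSndFDerivAt (by simp)
  exact (hsecond _ _).trans ((hsymm.eq _ _).trans (hsecond _ _).symm)

theorem pv_pu_eq_zero_of_pv_eq_zero (hg : ContDiff ℝ 2 g) {v : ℝ}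
    (hv : ∀ u, pv g (u, v) = 0) (u : ℝ) : pv (pu g) (u, v) = 0 := by
  have hderiv := hasDerivAt_pu (differentiable_fderiv_apply hg (0, 1) (u, v))
  rw [pv_pu_eq_pu_pv hg]
  exact hderiv.unique ((hasDerivAt_const u (0 : E)).congr_of_eventuallyEq (.of_forall hv))

end PartialDerivatives

namespace AdaptedPureFrontal

variable {f ν h ν₁ : ℝ × ℝ → R3}

section Smoothness

theorem differentiable_pu_f (H : AdaptedPureFrontal f ν h ν₁) : Differentiable ℝ (pu f) :=
  differentiable_fderiv_apply (contDiff_infty.1 H.smooth_f 2) _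

theorem differentiable_pu_ν (H : AdaptedPureFrontal f ν h ν₁) : Differentiable ℝ (pu ν) :=
  differentiable_fderiv_apply (contDiff_infty.1 H.smooth_ν 2) _

theorem differentiable_f (H : AdaptedPureFrontal f ν h ν₁) : Differentiable ℝ f :=
  H.smooth_f.differentiable (by simp)

theorem differentiable_ν (H : AdaptedPureFrontal f ν h ν₁) : Differentiable ℝ ν :=
  H.smooth_ν.differentiable (by simp)

theorem differentiable_h (H : AdaptedPureFrontal f ν h ν₁) : Differentiable ℝ h :=
  H.smooth_h.differentiable (by simp)

theorem differentiable_Et (H : AdaptedPureFrontal f ν h ν₁) : Differentiable ℝ (Et f) :=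
  fun p => differentiableAt_dot3 (H.differentiable_pu_f p) (H.differentiable_pu_f p)

theorem differentiable_Ft (H : AdaptedPureFrontal f ν h ν₁) : Differentiable ℝ (Ft f h) :=
  fun p => differentiableAt_dot3 (H.differentiable_pu_f p) (H.differentiable_h p)

theorem differentiable_Gt (H : AdaptedPureFrontal f ν h ν₁) : Differentiable ℝ (Gt h) :=
  fun p => differentiableAt_dot3 (H.differentiable_h p) (H.differentiable_h p)

theorem differentiable_Lt (H : AdaptedPureFrontal f ν h ν₁) : Differentiable ℝ (Lt f ν) :=
  fun p => (differentiableAt_dot3 (H.differentiable_pu_f p) (H.differentiable_pu_ν p)).neg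

theorem differentiable_Mt (H : AdaptedPureFrontal f ν h ν₁) : Differentiable ℝ (Mt h ν) :=
  fun p => (differentiableAt_dot3 (H.differentiable_h p) (H.differentiable_pu_ν p)).neg

theorem differentiable_Nt1 (H : AdaptedPureFrontal f ν h ν₁) : Differentiable ℝ (Nt1 h ν₁) :=
  fun p => (differentiableAt_dot3 (H.differentiable_h p)
    (H.smooth_ν₁.differentiable (by simp) p)).neg

theorem first_fundamental_det_ne_zero (H : AdaptedPureFrontal f ν h ν₁) (p : ℝ × ℝ) :
    Et f p * Gt h p - Ft f h p ^ 2 ≠ 0 := by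
  have hpair : LinearIndependent ℝ ![pu f p, h p] := by
    convert (H.indep p).comp (Fin.castSucc (n := 2)) (Fin.castSucc_injective 2) using 1
    ext i : 1
    fin_cases i <;> rfl
  exact linearIndependent_pair_iff_gram_ne_zero.1 hpair

theorem differentiable_Hm (H : AdaptedPureFrontal f ν h ν₁) :
    Differentiable ℝ (Hm f ν h ν₁) := by
  intro p
  have hE := H.differentiable_Et p
  have hF := H.differentiable_Ft p
  have hG := H.differentiable_Gt p
  have hL := H.differentiable_Lt p
  have hM := H.differentiable_Mt p
  have hN := H.differentiable_Nt1 p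
  have hdet : 2 * (Et f p * Gt h p - Ft f h p ^ 2) ≠ 0 :=
    mul_ne_zero two_ne_zero (H.first_fundamental_det_ne_zero p)
  unfold Hm
  fun_prop (disch := assumption)

theorem differentiable_Kg (H : AdaptedPureFrontal f ν h ν₁) :
    Differentiable ℝ (Kg f ν h ν₁) := by
  intro p
  have hE := H.differentiable_Et p
  have hF := H.differentiable_Ft p
  have hG := H.differentiable_Gt p
  have hL := H.differentiable_Lt p
  have hM := H.differentiable_Mt p
  have hN := H.differentiable_Nt1 p
  have hdet := H.first_fundamental_det_ne_zero p
  unfold Kg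
  fun_prop (disch := assumption)

theorem differentiableAt_kap (H : AdaptedPureFrontal f ν h ν₁) {p : ℝ × ℝ}
    (hp : Hm f ν h ν₁ p ^ 2 - Kg f ν h ν₁ p ≠ 0) (ε : ℝ) :
    DifferentiableAt ℝ (kap f ν h ν₁ ε) p :=
  (H.differentiable_Hm p).add
    (((((H.differentiable_Hm p).pow 2).sub (H.differentiable_Kg p)).sqrt hp).const_mul ε)

end Smoothness

theorem principal_equation (H : AdaptedPureFrontal f ν h ν₁) {ε : ℝ} (hε : ε = 1 ∨ ε = -1)
    {p : ℝ × ℝ} (hp : 0 ≤ Hm f ν h ν₁ p ^ 2 - Kg f ν h ν₁ p) :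
    (Lt f ν p - kap f ν h ν₁ ε p * Et f p) * (Nt1 h ν₁ p - kap f ν h ν₁ ε p * Gt h p) =
      (Mt h ν p - kap f ν h ν₁ ε p * Ft f h p) ^ 2 := by
  have hquad : kap f ν h ν₁ ε p ^ 2 - 2 * Hm f ν h ν₁ p * kap f ν h ν₁ ε p +
      Kg f ν h ν₁ p = 0 := by
    rw [kap]
    linear_combination ε ^ 2 * Real.sq_sqrt hp +
      (Hm f ν h ν₁ p ^ 2 - Kg f ν h ν₁ p) * sq_eq_one_iff.2 hε
  have hdet := H.first_fundamental_det_ne_zero p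
  rw [Hm, Kg] at hquad
  field_simp at hquad
  linear_combination hquad

theorem dot3_h_ν (H : AdaptedPureFrontal f ν h ν₁) (p : ℝ × ℝ) : dot3 (h p) (ν p) = 0 := by
  obtain ⟨u, v⟩ := p
  rcases eq_or_ne v 0 with rfl | hv
  · exact H.adapted_h_ν u
  · have horth := H.orth_fv_ν (u, v)
    rw [H.fv_eq, dot3_smul_left] at horth
    exact (mul_eq_zero.1 horth).resolve_left hv

theorem dot3_pu_ν_ν (H : AdaptedPureFrontal f ν h ν₁) (p : ℝ × ℝ) :
    dot3 (pu ν p) (ν p) = 0 := by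
  have hneg : dot3 (ν p) (pu ν p) = -dot3 (pu ν p) (ν p) :=
    dot3_fderiv_eq_neg_of_dot3_eq_const (H.differentiable_ν p) (H.differentiable_ν p) H.unit_ν _
  rw [dot3_comm] at hneg
  linarith

section SingularCurve

variable {ε u : ℝ}

theorem pv_f (H : AdaptedPureFrontal f ν h ν₁) (u : ℝ) : pv f (u, 0) = 0 := by
  rw [H.fv_eq, zero_smul]

theorem pv_ν (H : AdaptedPureFrontal f ν h ν₁) (u : ℝ) : pv ν (u, 0) = 0 := by
  rw [H.νv_eq, zero_smul]

theorem pv_pu_f (H : AdaptedPureFrontal f ν h ν₁) (u : ℝ) : pv (pu f) (u, 0) = 0 :=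
  pv_pu_eq_zero_of_pv_eq_zero (contDiff_infty.1 H.smooth_f 2) H.pv_f u

theorem pv_pu_ν (H : AdaptedPureFrontal f ν h ν₁) (u : ℝ) : pv (pu ν) (u, 0) = 0 :=
  pv_pu_eq_zero_of_pv_eq_zero (contDiff_infty.1 H.smooth_ν 2) H.pv_ν u

theorem Et_eq_one (H : AdaptedPureFrontal f ν h ν₁) (u : ℝ) : Et f (u, 0) = 1 :=
  H.adapted_fu u

theorem Ft_eq_zero (H : AdaptedPureFrontal f ν h ν₁) (u : ℝ) : Ft f h (u, 0) = 0 :=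
  H.adapted_fu_h u

theorem Gt_eq_one (H : AdaptedPureFrontal f ν h ν₁) (u : ℝ) : Gt h (u, 0) = 1 :=
  H.adapted_h u

theorem weingarten (H : AdaptedPureFrontal f ν h ν₁) (u : ℝ) :
    pu ν (u, 0) = -kν f ν u • pu f (u, 0) + -kt h ν u • h (u, 0) := by
  have hsum : pu ν (u, 0) + (kν f ν u • pu f (u, 0) + kt h ν u • h (u, 0)) = 0 := by
    refine eq_zero_of_dotProduct_eq_zero (H.indep (u, 0)) fun i => ?_
    rw [← dot3_eq_dotProduct, dot3_add_right, dot3_add_right, dot3_smul_right, dot3_smul_right,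
      kν, kt, Lt, Mt]
    fin_cases i <;>
      simp [H.adapted_fu, H.adapted_h, H.adapted_fu_h, dot3_comm (h _) (pu f _),
        dot3_comm (ν _) (pu f _), dot3_comm (ν _) (h _), dot3_comm (ν _) (pu ν _), H.orth_fu_ν,
        H.dot3_h_ν, H.dot3_pu_ν_ν]
  rw [neg_smul, neg_smul, ← neg_add]
  exact eq_neg_of_add_eq_zero_left hsum

theorem pv_Et (H : AdaptedPureFrontal f ν h ν₁) (u : ℝ) : pv (Et f) (u, 0) = 0 := by
  have hprod : pv (Et f) (u, 0) = dot3 (pv (pu f) (u, 0)) _ + dot3 _ (pv (pu f) (u, 0)) :=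
    fderiv_dot3_apply (H.differentiable_pu_f _) (H.differentiable_pu_f _) _
  rw [hprod, H.pv_pu_f, dot3_zero_left, dot3_zero_right, add_zero]

theorem pv_Ft (H : AdaptedPureFrontal f ν h ν₁) (u : ℝ) :
    pv (Ft f h) (u, 0) = dot3 (pu f (u, 0)) (pv h (u, 0)) := by
  have hprod : pv (Ft f h) (u, 0) = dot3 (pv (pu f) (u, 0)) _ + dot3 _ (pv h (u, 0)) :=
    fderiv_dot3_apply (H.differentiable_pu_f _) (H.differentiable_h _) _
  rw [hprod, H.pv_pu_f, dot3_zero_left, zero_add]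

theorem pv_Gt (H : AdaptedPureFrontal f ν h ν₁) (p : ℝ × ℝ) :
    pv (Gt h) p = 2 * dot3 (h p) (pv h p) := by
  have hprod : pv (Gt h) p = dot3 (pv h p) (h p) + dot3 (h p) (pv h p) :=
    fderiv_dot3_apply (H.differentiable_h _) (H.differentiable_h _) _
  rw [hprod, dot3_comm (pv h p), two_mul]

theorem pv_Lt (H : AdaptedPureFrontal f ν h ν₁) (u : ℝ) : pv (Lt f ν) (u, 0) = 0 := by
  have hprod : pv (fun q => dot3 (pu f q) (pu ν q)) (u, 0) =
      dot3 (pv (pu f) (u, 0)) _ + dot3 _ (pv (pu ν) (u, 0)) :=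
    fderiv_dot3_apply (H.differentiable_pu_f _) (H.differentiable_pu_ν _) _
  have hneg : pv (Lt f ν) (u, 0) = -pv (fun q => dot3 (pu f q) (pu ν q)) (u, 0) :=
    DFunLike.congr_fun fderiv_fun_neg _
  rw [hneg, hprod, H.pv_pu_f, H.pv_pu_ν, dot3_zero_left, dot3_zero_right, add_zero, neg_zero]

theorem pv_Mt (H : AdaptedPureFrontal f ν h ν₁) (u : ℝ) :
    pv (Mt h ν) (u, 0) = kν f ν u * pv (Ft f h) (u, 0) + kt h ν u * (pv (Gt h) (u, 0) / 2) := by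
  have hprod : pv (fun q => dot3 (h q) (pu ν q)) (u, 0) =
      dot3 (pv h (u, 0)) (pu ν (u, 0)) + dot3 _ (pv (pu ν) (u, 0)) :=
    fderiv_dot3_apply (H.differentiable_h _) (H.differentiable_pu_ν _) _
  have hneg : pv (Mt h ν) (u, 0) = -pv (fun q => dot3 (h q) (pu ν q)) (u, 0) :=
    DFunLike.congr_fun fderiv_fun_neg _
  rw [hneg, hprod, H.pv_pu_ν, dot3_zero_right, H.weingarten, dot3_add_right, dot3_smul_right,
    dot3_smul_right, dot3_comm (pv h _), dot3_comm (pv h _), H.pv_Ft, H.pv_Gt]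
  ring

theorem Hm_sq_sub_Kg_eq (H : AdaptedPureFrontal f ν h ν₁) (u : ℝ) :
    Hm f ν h ν₁ (u, 0) ^ 2 - Kg f ν h ν₁ (u, 0) =
      ((kν f ν u - Nt1 h ν₁ (u, 0)) / 2) ^ 2 + kt h ν u ^ 2 := by
  rw [Hm, Kg, H.Et_eq_one, H.Ft_eq_zero, H.Gt_eq_one, kν, kt]
  ring

theorem xj_eq (H : AdaptedPureFrontal f ν h ν₁) (u : ℝ) :
    xj f ν h ν₁ ε (u, 0) =
      -kt h ν u • pu f (u, 0) + (kν f ν u - kap f ν h ν₁ ε (u, 0)) • h (u, 0) := by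
  rw [xj, H.Et_eq_one, H.Ft_eq_zero, mul_zero, sub_zero, mul_one, kν, kt]

theorem norm3_xj_sq (H : AdaptedPureFrontal f ν h ν₁) (u : ℝ) :
    norm3 (xj f ν h ν₁ ε (u, 0)) ^ 2 =
      kt h ν u ^ 2 + (kν f ν u - kap f ν h ν₁ ε (u, 0)) ^ 2 := by
  rw [norm3_sq, H.xj_eq]
  simp only [dot3_add_left, dot3_add_right, dot3_smul_left, dot3_smul_right, H.adapted_fu,
    H.adapted_h, H.adapted_fu_h, dot3_comm (h _) (pu f _)]
  ring

theorem kν_sub_kap_mul_Nt1_sub_kap (H : AdaptedPureFrontal f ν h ν₁) (hε : ε = 1 ∨ ε = -1)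
    (u : ℝ) :
    (kν f ν u - kap f ν h ν₁ ε (u, 0)) * (Nt1 h ν₁ (u, 0) - kap f ν h ν₁ ε (u, 0)) =
      kt h ν u ^ 2 := by
  have hdisc : 0 ≤ Hm f ν h ν₁ (u, 0) ^ 2 - Kg f ν h ν₁ (u, 0) := by
    rw [H.Hm_sq_sub_Kg_eq]
    positivity
  simpa only [H.Et_eq_one, H.Ft_eq_zero, H.Gt_eq_one, mul_one, mul_zero, sub_zero, kν, kt]
    using H.principal_equation hε hdisc

theorem kν_ne_kap (H : AdaptedPureFrontal f ν h ν₁) (hε : ε = 1 ∨ ε = -1)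
    (hx : xj f ν h ν₁ ε (u, 0) ≠ 0) : kν f ν u ≠ kap f ν h ν₁ ε (u, 0) := by
  intro hκ
  have hkt := H.kν_sub_kap_mul_Nt1_sub_kap hε u
  rw [hκ, sub_self, zero_mul, eq_comm, sq_eq_zero_iff] at hkt
  exact hx (by rw [H.xj_eq, hkt, hκ, sub_self, neg_zero, zero_smul, zero_smul, add_zero])

theorem Hm_sq_sub_Kg_pos (H : AdaptedPureFrontal f ν h ν₁) (hε : ε = 1 ∨ ε = -1)
    (hx : xj f ν h ν₁ ε (u, 0) ≠ 0) :
    0 < Hm f ν h ν₁ (u, 0) ^ 2 - Kg f ν h ν₁ (u, 0) := by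
  have hne := sub_ne_zero.2 (H.kν_ne_kap hε hx)
  rw [H.Hm_sq_sub_Kg_eq]
  by_contra! hle
  have hkt : kt h ν u = 0 := by nlinarith
  have hN : kν f ν u - Nt1 h ν₁ (u, 0) = 0 := by nlinarith
  have hprod := H.kν_sub_kap_mul_Nt1_sub_kap hε u
  rw [hkt, ← sub_eq_zero.1 hN] at hprod
  exact mul_ne_zero hne hne (hprod.trans (zero_pow two_ne_zero))

theorem pv_kap_eq (H : AdaptedPureFrontal f ν h ν₁) (hε : ε = 1 ∨ ε = -1)
    (hdisc : 0 < Hm f ν h ν₁ (u, 0) ^ 2 - Kg f ν h ν₁ (u, 0)) :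
    (kν f ν u + Nt1 h ν₁ (u, 0) - 2 * kap f ν h ν₁ ε (u, 0)) * pv (kap f ν h ν₁ ε) (u, 0) =
      (kν f ν u - kap f ν h ν₁ ε (u, 0)) * (rc f ν h ν₁ u / 24) := by
  have hE := hasDerivAt_pv (H.differentiable_Et (u, 0))
  have hF := hasDerivAt_pv (H.differentiable_Ft (u, 0))
  have hG := hasDerivAt_pv (H.differentiable_Gt (u, 0))
  have hL := hasDerivAt_pv (H.differentiable_Lt (u, 0))
  have hM := hasDerivAt_pv (H.differentiable_Mt (u, 0))
  have hN := hasDerivAt_pv (H.differentiable_Nt1 (u, 0))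
  have hκ := hasDerivAt_pv (H.differentiableAt_kap hdisc.ne' ε)
  have hdisc_near : ∀ᶠ t in nhds (0 : ℝ), 0 < Hm f ν h ν₁ (u, t) ^ 2 - Kg f ν h ν₁ (u, t) :=
    ((H.differentiable_Hm.continuous.pow 2).sub H.differentiable_Kg.continuous).comp
      (Continuous.prodMk_right u) |>.continuousAt.eventually_const_lt hdisc
  have hderiv := ((hL.sub (hκ.mul hE)).mul (hN.sub (hκ.mul hG))).unique
    (((hM.sub (hκ.mul hF)).pow 2).congr_of_eventuallyEq
      (hdisc_near.mono fun t ht => H.principal_equation hε ht.le))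
  have hprod := H.kν_sub_kap_mul_Nt1_sub_kap hε u
  simp only [H.pv_Lt, H.Et_eq_one, mul_one, H.pv_Et, mul_zero, add_zero, zero_sub, Pi.sub_apply,
    Pi.mul_apply, H.Gt_eq_one, neg_mul, Nat.cast_ofNat, H.Ft_eq_zero, sub_zero,
    Nat.add_one_sub_one, pow_one, H.pv_Mt, zero_add] at hderiv
  rw [rc]
  simp only [kν, kt] at hderiv hprod ⊢
  linear_combination -hderiv + pv (Gt h) (u, 0) * hprod

theorem pv_kap_ne_zero (H : AdaptedPureFrontal f ν h ν₁) (hε : ε = 1 ∨ ε = -1)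
    (hx : xj f ν h ν₁ ε (u, 0) ≠ 0) (hrc : rc f ν h ν₁ u ≠ 0) :
    pv (kap f ν h ν₁ ε) (u, 0) ≠ 0 := by
  refine right_ne_zero_of_mul (a := kν f ν u + Nt1 h ν₁ (u, 0) - 2 * kap f ν h ν₁ ε (u, 0)) ?_
  rw [H.pv_kap_eq hε (H.Hm_sq_sub_Kg_pos hε hx)]
  exact mul_ne_zero (sub_ne_zero.2 (H.kν_ne_kap hε hx)) (div_ne_zero hrc (by norm_num))

end SingularCurve

section FocalSurface

variable {ε u : ℝ}

theorem differentiableAt_rho {p : ℝ × ℝ} (hκ : DifferentiableAt ℝ (kap f ν h ν₁ ε) p)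
    (hp : kap f ν h ν₁ ε p ≠ 0) : DifferentiableAt ℝ (rho f ν h ν₁ ε) p :=
  hκ.inv hp

theorem pv_rho_ne_zero {p : ℝ × ℝ} (hκ : DifferentiableAt ℝ (kap f ν h ν₁ ε) p)
    (hp : kap f ν h ν₁ ε p ≠ 0) (hpv : pv (kap f ν h ν₁ ε) p ≠ 0) :
    pv (rho f ν h ν₁ ε) p ≠ 0 := by
  have hrho : HasFDerivAt (rho f ν h ν₁ ε) _ p := (hasDerivAt_inv hp).comp_hasFDerivAt p
    hκ.hasFDerivAt
  rw [pv, hrho.fderiv]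
  exact mul_ne_zero (neg_ne_zero.2 (inv_ne_zero (pow_ne_zero 2 hp))) hpv

theorem fderiv_Cf_apply (H : AdaptedPureFrontal f ν h ν₁) {p : ℝ × ℝ}
    (hρ : DifferentiableAt ℝ (rho f ν h ν₁ ε) p) (w : ℝ × ℝ) :
    fderiv ℝ (Cf f ν h ν₁ ε) p w =
      fderiv ℝ f p w + (rho f ν h ν₁ ε p • fderiv ℝ ν p w +
        fderiv ℝ (rho f ν h ν₁ ε) p w • ν p) := by
  have hC : HasFDerivAt (Cf f ν h ν₁ ε) _ p :=
    (H.differentiable_f p).hasFDerivAt.add (hρ.hasFDerivAt.smul (H.differentiable_ν p).hasFDerivAt)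
  rw [hC.fderiv]
  simp

theorem pu_Cf (H : AdaptedPureFrontal f ν h ν₁) (hκ : kap f ν h ν₁ ε (u, 0) ≠ 0)
    (hρ : DifferentiableAt ℝ (rho f ν h ν₁ ε) (u, 0)) :
    pu (Cf f ν h ν₁ ε) (u, 0) =
      rho f ν h ν₁ ε (u, 0) • ((kap f ν h ν₁ ε (u, 0) - kν f ν u) • pu f (u, 0) +
        -kt h ν u • h (u, 0)) + pu (rho f ν h ν₁ ε) (u, 0) • ν (u, 0) := by
  have hρκ : rho f ν h ν₁ ε (u, 0) * kap f ν h ν₁ ε (u, 0) = 1 := inv_mul_cancel₀ hκ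
  have hCu : pu (Cf f ν h ν₁ ε) (u, 0) = pu f (u, 0) + (rho f ν h ν₁ ε (u, 0) • pu ν (u, 0) +
      pu (rho f ν h ν₁ ε) (u, 0) • ν (u, 0)) := H.fderiv_Cf_apply hρ _
  rw [hCu, H.weingarten]
  linear_combination (norm := module) -hρκ • pu f (u, 0)

theorem pv_Cf (H : AdaptedPureFrontal f ν h ν₁)
    (hρ : DifferentiableAt ℝ (rho f ν h ν₁ ε) (u, 0)) :
    pv (Cf f ν h ν₁ ε) (u, 0) = pv (rho f ν h ν₁ ε) (u, 0) • ν (u, 0) := by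
  have hCv : pv (Cf f ν h ν₁ ε) (u, 0) = pv f (u, 0) + (rho f ν h ν₁ ε (u, 0) • pv ν (u, 0) +
      pv (rho f ν h ν₁ ε) (u, 0) • ν (u, 0)) := H.fderiv_Cf_apply hρ _
  rw [hCv, H.pv_f, H.pv_ν, smul_zero, zero_add, zero_add]

theorem focal_first_fundamental_det (H : AdaptedPureFrontal f ν h ν₁)
    (hκ : kap f ν h ν₁ ε (u, 0) ≠ 0) (hρ : DifferentiableAt ℝ (rho f ν h ν₁ ε) (u, 0)) :
    EC f ν h ν₁ ε (u, 0) * GC f ν h ν₁ ε (u, 0) - FC f ν h ν₁ ε (u, 0) ^ 2 =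
      (pv (rho f ν h ν₁ ε) (u, 0) * rho f ν h ν₁ ε (u, 0) *
        norm3 (xj f ν h ν₁ ε (u, 0))) ^ 2 := by
  rw [mul_pow, H.norm3_xj_sq, EC, GC, FC, H.pu_Cf hκ hρ, H.pv_Cf hρ]
  simp only [dot3_add_left, dot3_add_right, dot3_smul_left, dot3_smul_right, H.adapted_fu,
    H.adapted_h, H.adapted_fu_h, H.unit_ν, H.orth_fu_ν, H.dot3_h_ν, dot3_comm (h _) (pu f _),
    dot3_comm (ν _) (pu f _), dot3_comm (ν _) (h _)]
  ring

theorem differentiableAt_ej (H : AdaptedPureFrontal f ν h ν₁) {p : ℝ × ℝ}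
    (hκ : DifferentiableAt ℝ (kap f ν h ν₁ ε) p) (hx : xj f ν h ν₁ ε p ≠ 0) :
    DifferentiableAt ℝ (ej f ν h ν₁ ε) p := by
  have hxj : DifferentiableAt ℝ (xj f ν h ν₁ ε) p :=
    (((H.differentiable_Mt p).sub (hκ.mul (H.differentiable_Ft p))).neg.smul
      (H.differentiable_pu_f p)).add
      (((H.differentiable_Lt p).sub (hκ.mul (H.differentiable_Et p))).smul (H.differentiable_h p))
  exact ((differentiableAt_norm3 hxj hx).inv (norm3_eq_zero.not.2 hx)).smul hxj

theorem dot3_ν_ej (H : AdaptedPureFrontal f ν h ν₁) (p : ℝ × ℝ) :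
    dot3 (ν p) (ej f ν h ν₁ ε p) = 0 := by
  simp only [ej, xj, dot3_smul_right, dot3_add_right, dot3_comm (ν p) (pu f p),
    dot3_comm (ν p) (h p), H.orth_fu_ν, H.dot3_h_ν, mul_zero, add_zero]

theorem dot3_pu_ν_ej (H : AdaptedPureFrontal f ν h ν₁) (u : ℝ) :
    dot3 (pu ν (u, 0)) (ej f ν h ν₁ ε (u, 0)) =
      kt h ν u * kap f ν h ν₁ ε (u, 0) / norm3 (xj f ν h ν₁ ε (u, 0)) := by
  rw [ej, dot3_smul_right, H.xj_eq, H.weingarten]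
  simp only [dot3_add_left, dot3_add_right, dot3_smul_left, dot3_smul_right, H.adapted_fu,
    H.adapted_h, H.adapted_fu_h, dot3_comm (h _) (pu f _)]
  ring

theorem dot3_pv_Cf_fderiv_ej (H : AdaptedPureFrontal f ν h ν₁)
    (hρ : DifferentiableAt ℝ (rho f ν h ν₁ ε) (u, 0))
    (he : DifferentiableAt ℝ (ej f ν h ν₁ ε) (u, 0)) (w : ℝ × ℝ) :
    dot3 (pv (Cf f ν h ν₁ ε) (u, 0)) (fderiv ℝ (ej f ν h ν₁ ε) (u, 0) w) =
      -(pv (rho f ν h ν₁ ε) (u, 0) *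
        dot3 (fderiv ℝ ν (u, 0) w) (ej f ν h ν₁ ε (u, 0))) := by
  rw [H.pv_Cf hρ, dot3_smul_left, dot3_fderiv_eq_neg_of_dot3_eq_const (H.differentiable_ν _) he
    H.dot3_ν_ej, mul_neg]

theorem MC_eq (H : AdaptedPureFrontal f ν h ν₁)
    (hρ : DifferentiableAt ℝ (rho f ν h ν₁ ε) (u, 0))
    (he : DifferentiableAt ℝ (ej f ν h ν₁ ε) (u, 0)) :
    MC f ν h ν₁ ε (u, 0) = pv (rho f ν h ν₁ ε) (u, 0) *
      (kt h ν u * kap f ν h ν₁ ε (u, 0) / norm3 (xj f ν h ν₁ ε (u, 0))) := by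
  rw [MC, pu, H.dot3_pv_Cf_fderiv_ej hρ he, neg_neg, ← H.dot3_pu_ν_ej, pu]

theorem NC_eq_zero (H : AdaptedPureFrontal f ν h ν₁)
    (hρ : DifferentiableAt ℝ (rho f ν h ν₁ ε) (u, 0))
    (he : DifferentiableAt ℝ (ej f ν h ν₁ ε) (u, 0)) : NC f ν h ν₁ ε (u, 0) = 0 := by
  have hνv : fderiv ℝ ν (u, 0) (0, 1) = 0 := H.pv_ν u
  rw [NC, pv.eq_def (ej _ _ _ _ _), H.dot3_pv_Cf_fderiv_ej hρ he, hνv, dot3_zero_left, mul_zero,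
    neg_zero, neg_zero]

theorem KC_eq (H : AdaptedPureFrontal f ν h ν₁) (hκ : kap f ν h ν₁ ε (u, 0) ≠ 0)
    (hdiff : DifferentiableAt ℝ (kap f ν h ν₁ ε) (u, 0)) (hx : xj f ν h ν₁ ε (u, 0) ≠ 0)
    (hpv : pv (rho f ν h ν₁ ε) (u, 0) ≠ 0) :
    KC f ν h ν₁ ε (u, 0) = -(kt h ν u ^ 2 * kap f ν h ν₁ ε (u, 0) ^ 4) /
      (kt h ν u ^ 2 + (kν f ν u - kap f ν h ν₁ ε (u, 0)) ^ 2) ^ 2 := by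
  have hρ := differentiableAt_rho hdiff hκ
  have he := H.differentiableAt_ej hdiff hx
  have hnorm := norm3_eq_zero.not.2 hx
  rw [KC, H.NC_eq_zero hρ he, H.MC_eq hρ he, H.focal_first_fundamental_det hκ hρ,
    ← H.norm3_xj_sq, rho]
  field_simp
  ring

theorem injective_fderiv_Cf (H : AdaptedPureFrontal f ν h ν₁) (hκ : kap f ν h ν₁ ε (u, 0) ≠ 0)
    (hdiff : DifferentiableAt ℝ (kap f ν h ν₁ ε) (u, 0)) (hx : xj f ν h ν₁ ε (u, 0) ≠ 0)
    (hpv : pv (rho f ν h ν₁ ε) (u, 0) ≠ 0) :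
    Function.Injective (fderiv ℝ (Cf f ν h ν₁ ε) (u, 0)) := by
  apply injective_fderiv_of_linearIndependent
  rw [linearIndependent_pair_iff_gram_ne_zero]
  refine (H.focal_first_fundamental_det hκ (differentiableAt_rho hdiff hκ)).trans_ne ?_
  exact pow_ne_zero 2 (mul_ne_zero (mul_ne_zero hpv (inv_ne_zero hκ)) (norm3_eq_zero.not.2 hx))

end FocalSurface

end AdaptedPureFrontal

theorem stmt_18_general {f ν h ν₁ : ℝ × ℝ → R3} (H : AdaptedPureFrontal f ν h ν₁)
    {ε : ℝ} (hε : ε = 1 ∨ ε = -1) {u : ℝ} (hκ : kap f ν h ν₁ ε (u, 0) ≠ 0)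
    (hx : xj f ν h ν₁ ε (u, 0) ≠ 0) (hrc : rc f ν h ν₁ u ≠ 0) :
    Function.Injective (fderiv ℝ (Cf f ν h ν₁ ε) (u, 0)) ∧
    KC f ν h ν₁ ε (u, 0) = -(kt h ν u ^ 2 * kap f ν h ν₁ ε (u, 0) ^ 4) /
      (kt h ν u ^ 2 + (kν f ν u - kap f ν h ν₁ ε (u, 0)) ^ 2) ^ 2 ∧
    (kt h ν u ≠ 0 → KC f ν h ν₁ ε (u, 0) < 0) := by
  have hdiff := H.differentiableAt_kap (H.Hm_sq_sub_Kg_pos hε hx).ne' ε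
  have hpv := AdaptedPureFrontal.pv_rho_ne_zero hdiff hκ (H.pv_kap_ne_zero hε hx hrc)
  have hKC := H.KC_eq hκ hdiff hx hpv
  refine ⟨H.injective_fderiv_Cf hκ hdiff hx hpv, hKC, fun hkt => ?_⟩
  rw [hKC, neg_div, neg_lt_zero]
  positivity

/-- at a 5/2-cuspidal edge of f (κ_t(0) ≠ 0, r_c(0) ≠ 0), the focal
surface C_j is an immersion at 0 and its Gaussian curvature there equals
−κ_t²κ_j⁴/(κ_t² + (κ_ν−κ_j)²)² < 0. -/
theorem stmt_18 (f ν h ν₁ : ℝ × ℝ → R3) (H : AdaptedPureFrontal f ν h ν₁)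
    (ε : ℝ) (hε : ε = 1 ∨ ε = -1)
    (hHK : ∀ p : ℝ × ℝ, Hm f ν h ν₁ p ^ 2 - Kg f ν h ν₁ p > 0)
    (hκ : ∀ p : ℝ × ℝ, kap f ν h ν₁ ε p ≠ 0)
    (hx : ∀ᶠ p in nhds (0 : ℝ × ℝ), xj f ν h ν₁ ε p ≠ 0)
    (hkt : kt h ν 0 ≠ 0) (hrc : rc f ν h ν₁ 0 ≠ 0) :
    Function.Injective ⇑(fderiv ℝ (Cf f ν h ν₁ ε) 0) ∧
    KC f ν h ν₁ ε 0 =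
      -((kt h ν 0) ^ 2 * (kap f ν h ν₁ ε 0) ^ 4) /
        ((kt h ν 0) ^ 2 + (kν f ν 0 - kap f ν h ν₁ ε 0) ^ 2) ^ 2 ∧
    KC f ν h ν₁ ε 0 < 0 :=
  have ⟨himm, hKC, hneg⟩ := stmt_18_general H hε (hκ 0) hx.self_of_nhds hrc
  ⟨himm, hKC, hneg hkt⟩
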